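/- Assume the partition-of-unity property Σ_{j ∈ ι} c i j + c∂ i = 0 for every i ∈ ι, that c i i = 0 for all i, that dv i j > 0 for all j ≠ i, that d∂ i > 0 for all i, that u' satisfies the low-order scheme, and the CFL condition 1 + 2*τ*(D i)/(m i) ≥ 0 at a node i, where D i := −(Σ_{j ≠ i} dv i j) − d∂ i. Let A ⊆ S be a convex set such that u i ∈ A, the bar states ū i j ∈ A for all j ≠ i, and ū∂ i ∈ A, where ū i j := (1/2) • (u j + u i) − (1/(2 * dv i j)) • ((f (u j) − f (u i))·(c i j)) and ū∂ i := (1/2) • (u∂ i + u i) − (1/(2 * d∂ i)) • ((f (u∂ i) − f (u i))·(c∂ i)). Then the update satisfies u' i ∈ A. -/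

import Mathlib

open Finset

/-- Contraction of a flux value `G : Fin M → Fin d → ℝ` with a vector
`c : Fin d → ℝ`, yielding a state in `Fin M → ℝ`. -/
noncomputable def contr {M d : ℕ} (G : Fin M → Fin d → ℝ) (c : Fin d → ℝ) :
    Fin M → ℝ :=
  fun k => ∑ α, G k α * c α

/-- A convex set contains `x` displaced by subconvex multiples of the directions from `x` to points
of the set. -/
theorem Convex.add_sum_smul_sub_mem {E κ : Type*} [AddCommGroup E] [Module ℝ E] {A : Set E}
    (hA : Convex ℝ A) {s : Finset κ} {w : κ → ℝ} {z : κ → E} {x : E} (hx : x ∈ A)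
    (hw : ∀ j ∈ s, 0 ≤ w j) (hw_sum : ∑ j ∈ s, w j ≤ 1) (hz : ∀ j ∈ s, z j ∈ A) :
    x + ∑ j ∈ s, w j • (z j - x) ∈ A := by
  have key : ∑ o ∈ insertNone s, o.elim (1 - ∑ j ∈ s, w j) w • o.elim x z ∈ A := by
    refine hA.sum_mem ?_ ?_ ?_
    · rintro (_ | j) hj
      · simpa using hw_sum
      · exact hw j (by simpa using hj)
    · simp [sum_insertNone]
    · rintro (_ | j) hj
      · exact hx
      · exact hz j (by simpa using hj)
  convert key using 1
  simp only [sum_insertNone, Option.elim, smul_sub, sum_sub_distrib, ← sum_smul, sub_smul, one_smul]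
  abel

theorem contr_sub_left {M d : ℕ} (G H : Fin M → Fin d → ℝ) (c : Fin d → ℝ) :
    contr (G - H) c = contr G c - contr H c := by
  ext k
  simp [contr, sub_mul]

theorem contr_zero_right {M d : ℕ} (G : Fin M → Fin d → ℝ) : contr G 0 = 0 := by
  ext k
  simp [contr]

theorem contr_add_right {M d : ℕ} (G : Fin M → Fin d → ℝ) (a b : Fin d → ℝ) :
    contr G (a + b) = contr G a + contr G b := by
  ext k
  simp [contr, mul_add, sum_add_distrib]

theorem contr_sum_right {M d : ℕ} {κ : Type*} (G : Fin M → Fin d → ℝ) (s : Finset κ)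
    (c : κ → Fin d → ℝ) : contr G (∑ j ∈ s, c j) = ∑ j ∈ s, contr G (c j) := by
  ext k
  simp only [contr, Finset.sum_apply, mul_sum]
  exact sum_comm

/-- The numerical flux between states `v` and `w`, written through their bar state. -/
theorem contr_sub_smul_eq_bar {M d : ℕ} (f : (Fin M → ℝ) → (Fin M → Fin d → ℝ))
    (v w : Fin M → ℝ) (c : Fin d → ℝ) {δ : ℝ} (hδ : δ ≠ 0) :
    contr (f w) c - δ • (w - v) = contr (f v) c - (2 * δ) •
      ((1 / 2 : ℝ) • (w + v) - (1 / (2 * δ)) • contr (f w - f v) c - v) := by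
  rw [contr_sub_left]
  ext k
  simp only [Pi.sub_apply, Pi.add_apply, Pi.smul_apply, smul_eq_mul]
  field_simp
  ring

/-- Invariant-set property of the low-order update: `cB`, `dB`, `uB` play the
roles of the boundary data `c∂`, `d∂`, `u∂`; `ubar` and `ubarB` are the bar
states, and `D` the diagonal viscosity. -/
theorem lowOrder_invariant_set
    {d M : ℕ} (hd : 1 ≤ d) (hM : 1 ≤ M)
    {ι : Type*} [Fintype ι] [DecidableEq ι]
    (m : ι → ℝ) (hm : ∀ i, 0 < m i)
    (τ : ℝ) (hτ : 0 < τ)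
    (c : ι → ι → (Fin d → ℝ)) (dv : ι → ι → ℝ)
    (cB : ι → (Fin d → ℝ)) (dB : ι → ℝ)
    (f : (Fin M → ℝ) → (Fin M → Fin d → ℝ))
    (u : ι → (Fin M → ℝ)) (uB : ι → (Fin M → ℝ)) (u' : ι → (Fin M → ℝ))
    (hpart : ∀ i, ∑ j, c i j + cB i = 0)
    (hcii : ∀ i, c i i = 0)
    (hdv : ∀ i j, j ≠ i → 0 < dv i j)
    (hdB : ∀ i, 0 < dB i)
    (hscheme : ∀ i,
      m i • (u' i - u i) +
        τ • ((∑ j, (contr (f (u j)) (c i j) - dv i j • (u j - u i))) +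
          contr (f (uB i)) (cB i) - dB i • (uB i - u i)) = 0)
    (ubar : ι → ι → (Fin M → ℝ))
    (hubar : ∀ i j, ubar i j =
      (1 / 2 : ℝ) • (u j + u i) -
        (1 / (2 * dv i j)) • contr (f (u j) - f (u i)) (c i j))
    (ubarB : ι → (Fin M → ℝ))
    (hubarB : ∀ i, ubarB i =
      (1 / 2 : ℝ) • (uB i + u i) -
        (1 / (2 * dB i)) • contr (f (uB i) - f (u i)) (cB i))
    (D : ι → ℝ)
    (hD : ∀ i, D i = -(∑ j ∈ Finset.univ.erase i, dv i j) - dB i)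
    (i : ι)
    (hCFL : 0 ≤ 1 + 2 * τ * D i / m i)
    (A : Set (Fin M → ℝ)) (hA : Convex ℝ A)
    (hui : u i ∈ A)
    (hbar : ∀ j, j ≠ i → ubar i j ∈ A)
    (hbarB : ubarB i ∈ A) :
    u' i ∈ A := by
  have hmi := hm i
  have hbar_diag : ubar i i = u i := by
    rw [hubar, hcii, contr_zero_right, smul_zero, sub_zero, ← two_smul ℝ (u i), smul_smul]
    norm_num
  have hflux (j : ι) : contr (f (u j)) (c i j) - dv i j • (u j - u i) =
      contr (f (u i)) (c i j) - (2 * dv i j) • (ubar i j - u i) := by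
    rcases eq_or_ne j i with rfl | hj
    · rw [hbar_diag]
      simp
    · rw [hubar]
      exact contr_sub_smul_eq_bar f _ _ _ (hdv i j hj).ne'
  have hfluxB : contr (f (uB i)) (cB i) - dB i • (uB i - u i) =
      contr (f (u i)) (cB i) - (2 * dB i) • (ubarB i - u i) := by
    rw [hubarB]
    exact contr_sub_smul_eq_bar f _ _ _ (hdB i).ne'
  have hconst : ∑ j, contr (f (u i)) (c i j) + contr (f (u i)) (cB i) = 0 := by
    rw [← contr_sum_right, ← contr_add_right, hpart, contr_zero_right]
  have hdrop : ∑ j, (2 * dv i j) • (ubar i j - u i) =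
      ∑ j ∈ univ.erase i, (2 * dv i j) • (ubar i j - u i) :=
    (sum_erase _ (by simp [hbar_diag])).symm
  have hupdate := hscheme i
  rw [add_sub_assoc, hfluxB, sum_congr rfl fun j _ => hflux j, sum_sub_distrib, hdrop,
    sub_add_sub_comm, hconst, zero_sub, smul_neg, ← sub_eq_add_neg, sub_eq_zero] at hupdate
  have key : u i + ∑ o ∈ insertNone (univ.erase i),
      (τ / m i * (2 * o.elim (dB i) (dv i))) • (o.elim (ubarB i) (ubar i) - u i) ∈ A := by
    refine hA.add_sum_smul_sub_mem hui ?_ ?_ ?_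
    · rintro (_ | j) hj
      · have := hdB i
        simp only [Option.elim]
        positivity
      · have := hdv i j (by simpa using hj)
        simp only [Option.elim]
        positivity
    · rw [← mul_sum, ← mul_sum, sum_insertNone]
      simp only [Option.elim]
      rw [hD] at hCFL
      have : 2 * τ * (-(∑ j ∈ univ.erase i, dv i j) - dB i) / m i =
        -(τ / m i * (2 * (dB i + ∑ j ∈ univ.erase i, dv i j))) := by ring
      linarith
    · rintro (_ | j) hj
      · exact hbarB
      · exact hbar j (by simpa using hj)
  convert key using 1
  rw [← sub_eq_iff_eq_add', ← inv_smul_smul₀ hmi.ne' (u' i - u i), hupdate, sum_insertNone]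
  simp only [Option.elim, mul_smul (τ / m i), ← smul_sum, ← smul_add]
  rw [smul_smul, add_comm, inv_mul_eq_div]
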